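/- Let (Y,d) be a metric space, p ∈ [1,∞), N ∈ ℕ with N ≥ 1, and for a Borel-measurable function f : [0,1] → Y define g_N(f) := sup_{h ∈ [1/2^N, 1)} ∫_0^{1−h} d(f(u+h),f(u))^p / h^p du ∈ [0,∞]. Then for all Borel-measurable p-integrable f, g : [0,1] → Y, one has g_N(f)^{1/p} ≤ g_N(g)^{1/p} + 2^{N+1} · ( ∫_0^1 d(f(u),g(u))^p du )^{1/p}. In particular, g_N is lower semicontinuous with respect to the pseudometric d_{L^p}. -/

import Mathlib

open MeasureTheory Set Filter
open scoped ENNReal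

/-- The truncated Sobolev energy `g_N(f) = sup_{h ∈ [1/2^N,1)} ∫_0^{1-h} d(f(u+h),f(u))^p/h^p du`. -/
noncomputable def truncSobolevEnergy {Y : Type*} [MetricSpace Y] (p : ℝ) (N : ℕ)
    (f : ℝ → Y) : ℝ≥0∞ :=
  ⨆ (h : ℝ) (_ : 1 / 2 ^ N ≤ h) (_ : h < 1),
    ∫⁻ u in Icc (0:ℝ) (1 - h), ENNReal.ofReal (dist (f (u + h)) (f u) ^ p / h ^ p)

/-!
Minkowski's inequality applied to
`d(f(u+h), f(u)) ≤ d(f(u+h), g(u+h)) + d(g(u+h), g(u)) + d(g(u), f(u))`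
bounds the `L^p` size of the increments of `f` over `[0, 1-h]` by that of `g` plus
`2 d_{L^p}(f, g)`; dividing by `h ≥ 2^{-N}` gives the Lipschitz estimate, and lower semicontinuity
follows from it.

Since `Y` need not be separable, the measurability of `u ↦ d(f(u), g(u))` is not automatic: it
rests on the fact that a Borel function on a standard Borel space has separable range. For an
uncountable `ε`-separated subset of the range, every union of preimages of the disjoint
`ε/2`-balls around its points is Borel. Choosing one point in each preimage gives a transversal
which is Borel, as the fixed point set of a Borel map, and all of whose subsets are Borel. But an
uncountable Borel set has more subsets than Borel subsets.
-/

section SeparableRange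

open Cardinal

theorem countable_of_standardBorelSpace_of_discreteMeasurableSpace (α : Type*) [MeasurableSpace α]
    [StandardBorelSpace α] [DiscreteMeasurableSpace α] : Countable α := by
  by_contra hα
  have card_cantor : #(Set (ℕ → Bool)) ≤ 𝔠 := by
    let e := PolishSpace.measurableEquivNatBoolOfNotCountable hα
    have measurable_all (s : Set (ℕ → Bool)) : MeasurableSet s :=
      e.measurableSet_preimage.1 (.of_discrete)
    obtain ⟨b, hb, hgen⟩ :=
      MeasurableSpace.CountablyGenerated.isCountablyGenerated (α := ℕ → Bool)
    rw [hgen] at measurable_all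
    calc #(Set (ℕ → Bool))
        = #{s | @MeasurableSet _ (MeasurableSpace.generateFrom b) s} := by
          rw [← mk_univ, eq_univ_of_forall (s := {s | MeasurableSet[.generateFrom b] s})
            measurable_all]
      _ ≤ 𝔠 := MeasurableSpace.cardinal_measurableSet_le_continuum
          (hb.le_aleph0.trans aleph0_le_continuum)
  have card_lt : 𝔠 < #(Set (ℕ → Bool)) := by
    simpa using cantor #(ℕ → Bool)
  exact card_lt.not_ge card_cantor

variable {α ι Y : Type*} [MeasurableSpace α] [StandardBorelSpace α]

theorem countable_of_measurable_surjective [MeasurableSpace ι] [DiscreteMeasurableSpace ι]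
    {φ : α → ι} (hφ : Measurable φ) (hφ_surj : Function.Surjective φ) : Countable ι := by
  let s := Function.surjInv hφ_surj
  have φ_s (i : ι) : φ (s i) = i := Function.surjInv_eq hφ_surj i
  have measurable_sφ : Measurable (s ∘ φ) := Measurable.of_discrete.comp hφ
  let T : Set α := {x | s (φ x) = x}
  have : StandardBorelSpace T := (measurableSet_eq_fun measurable_sφ measurable_id).standardBorel
  have : DiscreteMeasurableSpace T := by
    refine ⟨fun A => ?_⟩
    have A_eq : A = Subtype.val ⁻¹' (φ ⁻¹' {i | s i ∈ Subtype.val '' A}) := by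
      ext x
      have hx : s (φ x) = x := x.2
      simp [hx]
    rw [A_eq]
    exact measurable_subtype_coe (hφ .of_discrete)
  have : Countable T := countable_of_standardBorelSpace_of_discreteMeasurableSpace T
  exact Function.Surjective.countable (f := fun x : T => φ x)
    fun i => ⟨⟨s i, congrArg s (φ_s i)⟩, φ_s i⟩

theorem countable_of_pairwise_disjoint_of_measurableSet_biUnion {A : ι → Set α}
    (hne : ∀ i, (A i).Nonempty) (hdisj : Pairwise (Function.onFun Disjoint A))
    (hA : ∀ J : Set ι, MeasurableSet (⋃ i ∈ J, A i)) : Countable ι := by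
  let U : Set α := ⋃ i, A i
  have measurable_U : MeasurableSet U := by
    simpa only [biUnion_univ] using hA univ
  have : StandardBorelSpace U := measurable_U.standardBorel
  choose φ hφ using fun x : U => mem_iUnion.1 x.2
  have φ_eq {x : U} {i : ι} (hx : x.1 ∈ A i) : φ x = i :=
    hdisj.eq (not_disjoint_iff.2 ⟨x, hφ x, hx⟩)
  let : MeasurableSpace ι := ⊤
  have measurable_φ : Measurable φ := by
    intro J _
    have preimage_eq : φ ⁻¹' J = Subtype.val ⁻¹' (⋃ i ∈ J, A i) := by
      ext x
      simp only [mem_preimage, mem_iUnion₂]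
      exact ⟨fun hx => ⟨φ x, hx, hφ x⟩, fun ⟨i, hi, hx⟩ => φ_eq hx ▸ hi⟩
    rw [preimage_eq]
    exact measurable_subtype_coe (hA J)
  refine countable_of_measurable_surjective measurable_φ fun i => ?_
  obtain ⟨x, hx⟩ := hne i
  exact ⟨⟨x, mem_iUnion_of_mem i hx⟩, φ_eq hx⟩

theorem countable_of_isSeparated_of_subset_range [PseudoEMetricSpace Y] [MeasurableSpace Y]
    [OpensMeasurableSpace Y] {f : α → Y} (hf : Measurable f) {ε : ℝ≥0∞} (hε : ε ≠ 0) {S : Set Y}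
    (hS : Metric.IsSeparated ε S) (hSf : S ⊆ range f) : S.Countable := by
  let A (y : S) : Set α := f ⁻¹' Metric.eball y.1 (ε / 2)
  suffices Countable S from this
  refine countable_of_pairwise_disjoint_of_measurableSet_biUnion (A := A) ?_ ?_ fun J => ?_
  · rintro ⟨y, hy⟩
    obtain ⟨u, rfl⟩ := hSf hy
    exact ⟨u, Metric.mem_eball_self (ENNReal.half_pos hε)⟩
  · intro y z hyz
    refine Disjoint.preimage f (Metric.eball_disjoint ?_)
    rw [ENNReal.add_halves]
    exact (hS y.2 z.2 (Subtype.coe_ne_coe.2 hyz)).le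
  · simp only [A, ← preimage_iUnion₂]
    exact hf (isOpen_biUnion fun _ _ => Metric.isOpen_eball).measurableSet

theorem isSeparable_range_of_measurable [PseudoEMetricSpace Y] [MeasurableSpace Y]
    [OpensMeasurableSpace Y] {f : α → Y} (hf : Measurable f) :
    TopologicalSpace.IsSeparable (range f) := by
  suffices countable_cover : ∀ ε > 0, ∃ S : Set Y, S.Countable ∧
      range f ⊆ ⋃ y ∈ S, Metric.closedEBall y ε by
    obtain ⟨t, -, t_countable, ht⟩ :=
      EMetric.subset_countable_closure_of_almost_dense_set (range f) countable_cover
    exact ⟨t, t_countable, ht⟩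
  intro ε hε
  obtain ⟨δ, hδ, hδε⟩ := ENNReal.lt_iff_exists_nnreal_btwn.1 hε
  obtain ⟨S, hS⟩ := zorn_subset {S : Set Y | S ⊆ range f ∧ Metric.IsSeparated δ S}
    fun c hc hchain => ⟨⋃₀ c, ⟨sUnion_subset fun S hS => (hc hS).1,
      (pairwise_sUnion hchain.directedOn).2 fun S hS => (hc hS).2⟩,
      fun _ => subset_sUnion_of_mem⟩
  refine ⟨S, countable_of_isSeparated_of_subset_range hf hδ.ne' hS.prop.2 hS.prop.1, ?_⟩
  calc range f ⊆ ⋃ y ∈ S, Metric.closedEBall y δ :=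
        Metric.isCover_iff_subset_iUnion_closedEBall.1 (.of_maximal_isSeparated hS)
    _ ⊆ ⋃ y ∈ S, Metric.closedEBall y ε :=
        iUnion₂_mono fun _ _ => Metric.closedEBall_subset_closedEBall hδε.le

theorem stronglyMeasurable_of_measurable_of_standardBorelSpace [TopologicalSpace Y]
    [TopologicalSpace.PseudoMetrizableSpace Y] [MeasurableSpace Y] [BorelSpace Y] {f : α → Y}
    (hf : Measurable f) : StronglyMeasurable f := by
  let := TopologicalSpace.pseudoMetrizableSpacePseudoMetric Y
  exact stronglyMeasurable_iff_measurable_separable.2 ⟨hf, isSeparable_range_of_measurable hf⟩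

end SeparableRange

section LpEDist

variable {α β Y : Type*} [MeasurableSpace α] [MeasurableSpace β] {p : ℝ}

/-- The `L^p` distance `(∫ d(f, g)^p dμ)^{1/p}` between functions valued in a metric space, as an
extended real so that it makes sense without integrability. -/
noncomputable def lpEDist [PseudoEMetricSpace Y] (p : ℝ) (μ : Measure α) (f g : α → Y) : ℝ≥0∞ :=
  (∫⁻ u, edist (f u) (g u) ^ p ∂μ) ^ (1 / p)

theorem lpEDist_comm [PseudoEMetricSpace Y] (μ : Measure α) (f g : α → Y) :
    lpEDist p μ f g = lpEDist p μ g f := by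
  simp only [lpEDist, edist_comm]

theorem lpEDist_mono_measure [PseudoEMetricSpace Y] (hp : 0 ≤ p) {μ ν : Measure α} (hμν : μ ≤ ν)
    (f g : α → Y) : lpEDist p μ f g ≤ lpEDist p ν f g :=
  ENNReal.rpow_le_rpow (lintegral_mono' hμν le_rfl) (one_div_nonneg.2 hp)

variable [PseudoMetricSpace Y]

theorem lpEDist_eq_lintegral_ofReal_dist (hp : 0 ≤ p) (μ : Measure α) (f g : α → Y) :
    lpEDist p μ f g = (∫⁻ u, ENNReal.ofReal (dist (f u) (g u) ^ p) ∂μ) ^ (1 / p) := by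
  simp only [lpEDist, edist_dist, ENNReal.ofReal_rpow_of_nonneg dist_nonneg hp]

theorem lpEDist_triangle (hp : 1 ≤ p) {μ : Measure α} {f g k : α → Y}
    (hf : AEStronglyMeasurable f μ) (hg : AEStronglyMeasurable g μ)
    (hk : AEStronglyMeasurable k μ) : lpEDist p μ f k ≤ lpEDist p μ f g + lpEDist p μ g k := by
  have : 0 ≤ p := zero_le_one.trans hp
  calc lpEDist p μ f k
      ≤ (∫⁻ u, (edist (f u) (g u) + edist (g u) (k u)) ^ p ∂μ) ^ (1 / p) := by
        unfold lpEDist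
        gcongr
        exact edist_triangle _ _ _
    _ ≤ lpEDist p μ f g + lpEDist p μ g k :=
        ENNReal.lintegral_Lp_add_le (hf.edist hg) (hg.edist hk) hp

theorem lpEDist_comp_measurePreserving {μ : Measure α} {ν : Measure β} {T : α → β}
    (hT : MeasurePreserving T μ ν) {f g : β → Y} (hf : AEStronglyMeasurable f ν)
    (hg : AEStronglyMeasurable g ν) : lpEDist p μ (f ∘ T) (g ∘ T) = lpEDist p ν f g := by
  simp only [lpEDist, Function.comp_apply]
  rw [← hT.map_eq] at hf hg ⊢
  rw [lintegral_map' ((hf.edist hg).pow_const p) hT.aemeasurable]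

theorem lpEDist_comp_self_le (hp : 1 ≤ p) {μ ν ρ : Measure α} {T : α → α}
    (hT : MeasurePreserving T μ ν) (hμ : μ ≤ ρ) (hν : ν ≤ ρ) {f g : α → Y}
    (hf : AEStronglyMeasurable f ρ) (hg : AEStronglyMeasurable g ρ) :
    lpEDist p μ (f ∘ T) f ≤ lpEDist p μ (g ∘ T) g + 2 * lpEDist p ρ f g := by
  have hp₀ : 0 ≤ p := zero_le_one.trans hp
  have hfT := (hf.mono_measure hν).comp_measurePreserving hT
  have hgT := (hg.mono_measure hν).comp_measurePreserving hT
  have hfμ := hf.mono_measure hμ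
  have hgμ := hg.mono_measure hμ
  calc lpEDist p μ (f ∘ T) f
      ≤ lpEDist p μ (f ∘ T) (g ∘ T) + (lpEDist p μ (g ∘ T) g + lpEDist p μ g f) :=
        (lpEDist_triangle hp hfT hgT hfμ).trans
          (add_le_add_right (lpEDist_triangle hp hgT hgμ hfμ) _)
    _ = lpEDist p ν f g + (lpEDist p μ (g ∘ T) g + lpEDist p μ f g) := by
        rw [lpEDist_comp_measurePreserving hT (hf.mono_measure hν) (hg.mono_measure hν),
          lpEDist_comm μ g f]
    _ ≤ lpEDist p ρ f g + (lpEDist p μ (g ∘ T) g + lpEDist p ρ f g) := by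
        gcongr <;> exact lpEDist_mono_measure hp₀ ‹_› f g
    _ = lpEDist p μ (g ∘ T) g + 2 * lpEDist p ρ f g := by ring

theorem lpEDist_translate_le (hp : 1 ≤ p) {a b h : ℝ} (hh : 0 ≤ h) {f g : ℝ → Y}
    (hf : AEStronglyMeasurable f (volume.restrict (Icc a b)))
    (hg : AEStronglyMeasurable g (volume.restrict (Icc a b))) :
    lpEDist p (volume.restrict (Icc a (b - h))) (fun u => f (u + h)) f ≤
      lpEDist p (volume.restrict (Icc a (b - h))) (fun u => g (u + h)) g +
        2 * lpEDist p (volume.restrict (Icc a b)) f g := by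
  have translate_preserving : MeasurePreserving (· + h) (volume.restrict (Icc a (b - h)))
      (volume.restrict (Icc (a + h) b)) := by
    simpa using (measurePreserving_add_right volume h).restrict_preimage
      (measurableSet_Icc (a := a + h) (b := b))
  exact lpEDist_comp_self_le hp translate_preserving
    (Measure.restrict_mono_set _ (Icc_subset_Icc_right (by linarith)))
    (Measure.restrict_mono_set _ (Icc_subset_Icc_left (by linarith))) hf hg

theorem lintegral_ofReal_dist_rpow_div_rpow (hp : 0 < p) {h : ℝ} (hh : 0 < h) (μ : Measure α)
    (f g : α → Y) :
    (∫⁻ u, ENNReal.ofReal (dist (f u) (g u) ^ p / h ^ p) ∂μ) ^ (1 / p) =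
      (ENNReal.ofReal h)⁻¹ * lpEDist p μ f g := by
  have integrand_eq (u : α) : ENNReal.ofReal (dist (f u) (g u) ^ p / h ^ p) =
      (ENNReal.ofReal h)⁻¹ ^ p * edist (f u) (g u) ^ p := by
    rw [← Real.div_rpow dist_nonneg hh.le, ← ENNReal.ofReal_rpow_of_nonneg (by positivity) hp.le,
      ENNReal.ofReal_div_of_pos hh, ← edist_dist, div_eq_mul_inv, mul_comm,
      ENNReal.mul_rpow_of_nonneg _ _ hp.le]
  have const_ne_top : (ENNReal.ofReal h)⁻¹ ^ p ≠ ∞ := by simp [hh]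
  simp only [integrand_eq]
  rw [lintegral_const_mul' _ _ const_ne_top, ENNReal.mul_rpow_of_nonneg _ _ (by positivity),
    one_div, ENNReal.rpow_rpow_inv hp.ne', lpEDist, one_div]

end LpEDist

section TruncSobolevEnergy

variable {Y ι : Type*} [MetricSpace Y] {p : ℝ}

theorem truncSobolevEnergy_rpow_one_div (hp : 0 < p) (N : ℕ) (f : ℝ → Y) :
    truncSobolevEnergy p N f ^ (1 / p) =
      ⨆ (h : ℝ) (_ : 1 / 2 ^ N ≤ h) (_ : h < 1), (ENNReal.ofReal h)⁻¹ *
        lpEDist p (volume.restrict (Icc 0 (1 - h))) (fun u => f (u + h)) f := by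
  let root := ENNReal.orderIsoRpow (1 / p) (one_div_pos.2 hp)
  change root (truncSobolevEnergy p N f) = _
  simp only [truncSobolevEnergy, root.map_iSup]
  refine iSup_congr fun h => iSup_congr fun hN => iSup_congr fun _ => ?_
  exact lintegral_ofReal_dist_rpow_div_rpow hp (lt_of_lt_of_le (by positivity) hN) _ _ _

theorem truncSobolevEnergy_rpow_one_div_le_add (hp : 1 ≤ p) (N : ℕ) {f g : ℝ → Y}
    (hf : AEStronglyMeasurable f (volume.restrict (Icc 0 1)))
    (hg : AEStronglyMeasurable g (volume.restrict (Icc 0 1))) :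
    truncSobolevEnergy p N f ^ (1 / p) ≤ truncSobolevEnergy p N g ^ (1 / p) +
      2 ^ (N + 1) * lpEDist p (volume.restrict (Icc 0 1)) f g := by
  have hp₀ : 0 < p := one_pos.trans_le hp
  simp only [truncSobolevEnergy_rpow_one_div hp₀]
  refine iSup_le fun h => iSup₂_le fun hN h1 => ?_
  have hh : 0 < h := lt_of_lt_of_le (by positivity) hN
  have inv_le : (ENNReal.ofReal h)⁻¹ ≤ 2 ^ N := by
    rw [ENNReal.inv_le_iff_inv_le, ← ENNReal.ofReal_ofNat 2, ← ENNReal.ofReal_pow zero_le_two,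
      ← ENNReal.ofReal_inv_of_pos (by positivity)]
    exact ENNReal.ofReal_le_ofReal (by rwa [← one_div])
  let D := lpEDist p (volume.restrict (Icc 0 1)) f g
  let I (k : ℝ → Y) := lpEDist p (volume.restrict (Icc 0 (1 - h))) (fun u => k (u + h)) k
  calc (ENNReal.ofReal h)⁻¹ * I f
      ≤ (ENNReal.ofReal h)⁻¹ * (I g + 2 * D) := by
        gcongr
        exact lpEDist_translate_le hp hh.le hf hg
    _ = (ENNReal.ofReal h)⁻¹ * I g + (ENNReal.ofReal h)⁻¹ * (2 * D) := mul_add _ _ _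
    _ ≤ (ENNReal.ofReal h)⁻¹ * I g + 2 ^ N * (2 * D) := by gcongr
    _ = (ENNReal.ofReal h)⁻¹ * I g + 2 ^ (N + 1) * D := by ring
    _ ≤ _ := by
        gcongr
        exact le_iSup_of_le h (le_iSup₂_of_le hN h1 le_rfl)

theorem truncSobolevEnergy_le_liminf (hp : 1 ≤ p) (N : ℕ) {l : Filter ι} {f : ℝ → Y}
    {fs : ι → ℝ → Y} (hf : AEStronglyMeasurable f (volume.restrict (Icc 0 1)))
    (hfs : ∀ i, AEStronglyMeasurable (fs i) (volume.restrict (Icc 0 1)))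
    (hlim : Tendsto (fun i => lpEDist p (volume.restrict (Icc 0 1)) (fs i) f) l (nhds 0)) :
    truncSobolevEnergy p N f ≤ liminf (fun i => truncSobolevEnergy p N (fs i)) l := by
  let D (i : ι) : ℝ≥0∞ := 2 ^ (N + 1) * lpEDist p (volume.restrict (Icc 0 1)) f (fs i)
  have D_tendsto : Tendsto D l (nhds 0) := by
    simpa [D, lpEDist_comm _ f] using ENNReal.Tendsto.const_mul hlim (.inr (by finiteness))
  let root := ENNReal.orderIsoRpow (1 / p) (one_div_pos.2 (one_pos.trans_le hp))
  rw [← root.le_iff_le]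
  calc root (truncSobolevEnergy p N f)
      ≤ liminf ((fun i => root (truncSobolevEnergy p N (fs i))) + D) l := by
        exact le_liminf_of_le (by isBoundedDefault)
          (.of_forall fun i => truncSobolevEnergy_rpow_one_div_le_add hp N hf (hfs i))
    _ = liminf (fun i => root (truncSobolevEnergy p N (fs i))) l :=
        ENNReal.liminf_add_of_right_tendsto_zero D_tendsto _
    _ = root (liminf (fun i => truncSobolevEnergy p N (fs i)) l) := root.liminf_apply.symm

theorem truncSobolevEnergy_lipschitz_and_lsc_general (hp : 1 ≤ p) (N : ℕ) (l : Filter ι) :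
    (∀ f g : ℝ → Y, AEStronglyMeasurable f (volume.restrict (Icc 0 1)) →
      AEStronglyMeasurable g (volume.restrict (Icc 0 1)) →
      truncSobolevEnergy p N f ^ (1 / p) ≤ truncSobolevEnergy p N g ^ (1 / p) + 2 ^ (N + 1) *
        (∫⁻ u in Icc (0 : ℝ) 1, ENNReal.ofReal (dist (f u) (g u) ^ p)) ^ (1 / p)) ∧
    (∀ f : ℝ → Y, AEStronglyMeasurable f (volume.restrict (Icc 0 1)) →
      ∀ fs : ι → ℝ → Y, (∀ i, AEStronglyMeasurable (fs i) (volume.restrict (Icc 0 1))) →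
      Tendsto (fun i => ∫⁻ u in Icc (0 : ℝ) 1, ENNReal.ofReal (dist (fs i u) (f u) ^ p))
        l (nhds 0) →
      truncSobolevEnergy p N f ≤ liminf (fun i => truncSobolevEnergy p N (fs i)) l) := by
  have hp₀ : 0 < p := one_pos.trans_le hp
  refine ⟨fun f g hf hg => ?_, fun f hf fs hfs hlim => ?_⟩
  · rw [← lpEDist_eq_lintegral_ofReal_dist hp₀.le]
    exact truncSobolevEnergy_rpow_one_div_le_add hp N hf hg
  · refine truncSobolevEnergy_le_liminf hp N hf hfs ?_
    simpa [lpEDist_eq_lintegral_ofReal_dist hp₀.le, hp₀] using hlim.ennrpow_const (1 / p)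

end TruncSobolevEnergy

/-- the truncated Sobolev energy `g_N` satisfies, for Borel `p`-integrable
`f, g`, the estimate `g_N(f)^{1/p} ≤ g_N(g)^{1/p} + 2^{N+1} d_{L^p}(f,g)`; in particular
it is (sequentially) lower semicontinuous with respect to the `L^p` pseudometric. -/
theorem truncSobolevEnergy_lipschitz_and_lsc {Y : Type*} [MetricSpace Y]
    [MeasurableSpace Y] [BorelSpace Y]
    (p : ℝ) (hp : 1 ≤ p) (N : ℕ) (hN : 1 ≤ N) :
    (∀ f g : ℝ → Y, Measurable f → Measurable g →
      (∃ y₀ : Y, ∫⁻ u in Icc (0:ℝ) 1, ENNReal.ofReal (dist (f u) y₀ ^ p) < ⊤) →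
      (∃ y₀ : Y, ∫⁻ u in Icc (0:ℝ) 1, ENNReal.ofReal (dist (g u) y₀ ^ p) < ⊤) →
      (truncSobolevEnergy p N f) ^ (1/p)
        ≤ (truncSobolevEnergy p N g) ^ (1/p)
          + (2 : ℝ≥0∞) ^ (N + 1) *
            (∫⁻ u in Icc (0:ℝ) 1, ENNReal.ofReal (dist (f u) (g u) ^ p)) ^ (1/p)) ∧
    (∀ f : ℝ → Y, Measurable f →
      (∃ y₀ : Y, ∫⁻ u in Icc (0:ℝ) 1, ENNReal.ofReal (dist (f u) y₀ ^ p) < ⊤) →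
      ∀ fs : ℕ → ℝ → Y, (∀ n, Measurable (fs n)) →
      (∀ n, ∃ y₀ : Y, ∫⁻ u in Icc (0:ℝ) 1, ENNReal.ofReal (dist (fs n u) y₀ ^ p) < ⊤) →
      Tendsto (fun n => ∫⁻ u in Icc (0:ℝ) 1, ENNReal.ofReal (dist (fs n u) (f u) ^ p))
        atTop (nhds 0) →
      truncSobolevEnergy p N f ≤ liminf (fun n => truncSobolevEnergy p N (fs n)) atTop) := by
  have aesm {f : ℝ → Y} (hf : Measurable f) :
      AEStronglyMeasurable f (volume.restrict (Icc 0 1)) :=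
    (stronglyMeasurable_of_measurable_of_standardBorelSpace hf).aestronglyMeasurable
  obtain ⟨lipschitz, lsc⟩ :=
    truncSobolevEnergy_lipschitz_and_lsc_general (Y := Y) hp N (atTop (α := ℕ))
  exact ⟨fun f g hf hg _ _ => lipschitz f g (aesm hf) (aesm hg),
    fun f hf _ fs hfs _ hlim => lsc f (aesm hf) fs (fun n => aesm (hfs n)) hlim⟩
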